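/- arXiv:math/0409186 — 3 statements merged into one kernel-verified Lean document; each statement's English description precedes it below -/
import Mathlib

section
/- Let N be a prime number and let T, Ω be subsets of ℤ_N with |T| = |Ω|. Then the restricted Fourier transform F_{T→Ω} : ℓ²(T) → ℓ²(Ω), defined by F_{T→Ω} f := f̂|_Ω for f supported on T, is a bijection. Consequently, F_{T→Ω} is injective whenever |T| ≤ |Ω| and surjective whenever |T| ≥ |Ω|, and the same claims hold with the Fourier transform replaced by the inverse Fourier transform. -/
/-!
This is the theorem of Chebotarëv on minors of the Fourier matrix. A function `f` on `T` has the
generating polynomial `g = ∑ t, f t * X ^ t`, with at most `#T` terms and degree less than `p`,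
and its Fourier transform at `k` is the value of `g` at a `p`-th root of unity. So it suffices
that a nonzero `g` of degree less than `p` has fewer `p`-th roots of unity among its roots than it
has terms. Reduce modulo the maximal ideal of a valuation ring with residue characteristic `p`,
after scaling `g` so that its reduction is nonzero: all `p`-th roots of unity collapse to `1`, so
`1` becomes a root of high multiplicity. But over a field of characteristic `p` a polynomial of
degree less than `p` vanishes at `1` to order less than its number of terms, since the operators
`g ↦ X * derivative g - n * g` remove terms one at a time and lower this order by at most one.
Surjectivity is injectivity of the transposed matrix, which is again a Fourier matrix.
-/

open Polynomial Finset
open scoped Matrix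

section SparsePolynomials

variable {R : Type*} [CommRing R]

lemma coeff_X_mul_derivative_sub_natCast_mul (g : R[X]) (m n : ℕ) :
    (X * derivative g - (m : R[X]) * g).coeff n = ((n : R) - m) * g.coeff n := by
  rw [coeff_sub, coeff_natCast_mul, sub_mul]
  cases n with
  | zero => simp
  | succ n => rw [coeff_X_mul, coeff_derivative, Nat.cast_succ, mul_comm]

lemma X_sub_C_pow_dvd_X_mul_derivative_sub {g : R[X]} {r : R} {m : ℕ}
    (hdvd : (X - C r) ^ (m + 1) ∣ g) (n : ℕ) :
    (X - C r) ^ m ∣ X * derivative g - (n : R[X]) * g :=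
  dvd_sub ((pow_sub_one_dvd_derivative_of_pow_dvd hdvd).mul_left _)
    (((pow_dvd_pow _ m.le_succ).trans hdvd).mul_left _)

variable [IsDomain R]

lemma support_X_mul_derivative_sub_natCast_mul {g : R[X]}
    (hinj : Set.InjOn (Nat.cast : ℕ → R) g.support) {m : ℕ} (hm : m ∈ g.support) :
    (X * derivative g - (m : R[X]) * g).support = g.support.erase m := by
  ext n
  rw [mem_support_iff, coeff_X_mul_derivative_sub_natCast_mul, mul_ne_zero_iff, sub_ne_zero,
    ← mem_support_iff, mem_erase]
  exact and_congr_left fun hn ↦ (hinj.eq_iff hn hm).not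

lemma eq_zero_of_X_sub_C_pow_dvd_of_card_support_le {r : R} (hr : r ≠ 0) {m : ℕ} {g : R[X]}
    (hinj : Set.InjOn (Nat.cast : ℕ → R) g.support) (hcard : #g.support ≤ m)
    (hdvd : (X - C r) ^ m ∣ g) : g = 0 := by
  induction m generalizing g with
  | zero => exact card_support_eq_zero.mp (Nat.le_zero.mp hcard)
  | succ m ih =>
    by_contra hg
    obtain ⟨n, hn⟩ := nonempty_support_iff.mpr hg
    have hsupp := support_X_mul_derivative_sub_natCast_mul hinj hn
    have hzero : X * derivative g - (n : R[X]) * g = 0 := by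
      refine ih ?_ ?_ (X_sub_C_pow_dvd_X_mul_derivative_sub hdvd n)
      · exact hsupp ▸ hinj.mono (coe_subset.mpr (erase_subset n _))
      · rw [hsupp, card_erase_of_mem hn]
        exact Nat.sub_le_of_le_add hcard
    have hcard_one : #g.support = 1 := by
      rw [← card_erase_add_one hn, ← hsupp, hzero, support_zero, card_empty]
    obtain ⟨k, c, hc, rfl⟩ := card_support_eq_one.mp hcard_one
    have hroot : (C c * X ^ k).eval r = 0 :=
      dvd_iff_isRoot.mp ((dvd_pow_self _ m.succ_ne_zero).trans hdvd)
    rw [eval_C_mul, eval_X_pow] at hroot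
    exact mul_ne_zero hc (pow_ne_zero k hr) hroot

lemma rootMultiplicity_lt_card_support {r : R} (hr : r ≠ 0) {g : R[X]} (hg : g ≠ 0)
    (hinj : Set.InjOn (Nat.cast : ℕ → R) g.support) :
    g.rootMultiplicity r < #g.support := by
  by_contra! hcard
  exact hg (eq_zero_of_X_sub_C_pow_dvd_of_card_support_le hr hinj hcard
    (pow_rootMultiplicity_dvd g r))

end SparsePolynomials

section RootsOfUnity

variable {p : ℕ} [Fact p.Prime]

lemma card_lt_card_support_map {R k : Type*} [CommRing R] [IsDomain R] [CommRing k] [IsDomain k]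
    [CharP k p] (φ : R →+* k) {g : R[X]} (hg : g.map φ ≠ 0) (hdeg : g.natDegree < p)
    {S : Finset R} (hS : ∀ x ∈ S, x ^ p = 1) (hroot : ∀ x ∈ S, g.IsRoot x) :
    #S < #(g.map φ).support := by
  classical
  have hφ : ∀ x ∈ S, φ x = 1 := fun x hx ↦
    frobenius_inj k p (by simp only [frobenius_def, ← map_pow, hS x hx, map_one])
  have hg0 : g ≠ 0 := fun h ↦ hg (by rw [h, Polynomial.map_zero])
  have hSroots : S.val ≤ g.roots := val_le_iff_val_subset.mpr fun x hx ↦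
    (mem_roots hg0).mpr (hroot x hx)
  have hreplicate : Multiset.replicate #S 1 ≤ (g.map φ).roots := calc
    Multiset.replicate #S 1 = S.val.map φ := by
      rw [Multiset.map_congr rfl hφ, Multiset.map_const', card_val]
    _ ≤ g.roots.map φ := Multiset.map_le_map hSroots
    _ ≤ (g.map φ).roots := map_roots_le hg
  have hinj : Set.InjOn (Nat.cast : ℕ → k) (g.map φ).support :=
    (CharP.natCast_injOn_Iio k p).mono fun n hn ↦
      ((le_natDegree_of_mem_supp n hn).trans natDegree_map_le).trans_lt hdeg
  calc
    #S ≤ (g.map φ).rootMultiplicity 1 := by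
      rwa [← count_roots, Multiset.le_count_iff_replicate_le]
    _ < #(g.map φ).support := rootMultiplicity_lt_card_support one_ne_zero hg hinj

variable {K : Type*} [Field K]

variable (p K) in
lemma exists_valuationSubring_charP_residueField [CharZero K] :
    ∃ B : ValuationSubring K, CharP (IsLocalRing.ResidueField B) p := by
  have hp : p.Prime := Fact.out
  let A : Subring K := (Int.castRingHom K).range
  have hspan : Ideal.span {(p : A)} ≠ ⊤ := by
    rw [Ne, Ideal.span_singleton_eq_top]
    intro hunit
    obtain ⟨⟨_, c, rfl⟩, hc⟩ := hunit.exists_right_inv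
    have hmul : (p : ℤ) * c = 1 := by
      have hmulK : (p : K) * c = 1 := congrArg Subtype.val hc
      exact_mod_cast hmulK
    exact (Nat.prime_iff_prime_int.mp hp).not_isUnit (.of_mul_eq_one c hmul)
  obtain ⟨B, -, hB⟩ := Ideal.image_subset_nonunits_valuationSubring _ hspan
  have hpB : ((p : B) : K) ∈ B.nonunits :=
    hB ⟨(p : A), Ideal.mem_span_singleton_self _, by simp⟩
  have hp0 : (p : IsLocalRing.ResidueField B) = 0 := by
    rw [← map_natCast (IsLocalRing.residue B), IsLocalRing.residue_eq_zero_iff]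
    exact ValuationSubring.coe_mem_nonunits_iff.mp hpB
  exact ⟨B, (CharP.charP_iff_prime_eq_zero hp).mpr hp0⟩

lemma exists_map_subtype_eq_C_mul_and_map_residue_ne_zero (B : ValuationSubring K) {g : K[X]}
    (hg : g ≠ 0) : ∃ c ≠ 0, ∃ h : B[X],
      h.map B.subtype = C c * g ∧ h.map (IsLocalRing.residue B) ≠ 0 := by
  obtain ⟨n, hn, hmax⟩ := g.support.exists_max_image (fun i ↦ B.valuation (g.coeff i))
    (nonempty_support_iff.mpr hg)
  have hn0 : g.coeff n ≠ 0 := mem_support_iff.mp hn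
  have hmax' (i : ℕ) : B.valuation (g.coeff i) ≤ B.valuation (g.coeff n) := by
    by_cases hi : i ∈ g.support
    · exact hmax i hi
    · simp [notMem_support_iff.mp hi]
  have hlifts : C (g.coeff n)⁻¹ * g ∈ lifts B.subtype := by
    refine (lifts_iff_coeff_lifts _).mpr fun i ↦ ⟨⟨(g.coeff n)⁻¹ * g.coeff i, ?_⟩, ?_⟩
    · rw [← B.valuation_le_one_iff, mul_comm, ← div_eq_mul_inv, map_div₀]
      exact div_le_one_of_le₀ (hmax' i) zero_le
    · exact (coeff_C_mul _).symm
  obtain ⟨h, hmap⟩ := (mem_lifts _).mp hlifts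
  refine ⟨_, inv_ne_zero hn0, h, hmap, fun hres ↦ ?_⟩
  have hcoeff : h.coeff n = 1 := Subtype.val_injective <| by
    simpa [hn0] using congrArg (coeff · n) hmap
  simpa [hcoeff] using congrArg (coeff · n) hres

lemma mem_valuationSubring_of_pow_eq_one (B : ValuationSubring K) {x : K} {n : ℕ} (hn : n ≠ 0)
    (hx : x ^ n = 1) : x ∈ B := by
  rw [← B.valuation_le_one_iff, ← pow_le_one_iff hn, ← map_pow, hx, map_one]

theorem card_lt_card_support_of_pow_eq_one [CharZero K] {g : K[X]} (hg : g ≠ 0)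
    (hdeg : g.natDegree < p) {S : Finset K} (hS : ∀ x ∈ S, x ^ p = 1)
    (hroot : ∀ x ∈ S, g.IsRoot x) : #S < #g.support := by
  classical
  obtain ⟨B, hB⟩ := exists_valuationSubring_charP_residueField p K
  obtain ⟨c, hc, h, hmap, hres⟩ := exists_map_subtype_eq_C_mul_and_map_residue_ne_zero B hg
  have hsubtype : Function.Injective B.subtype := Subtype.val_injective
  have hsupp : h.support = g.support := by
    rw [← support_map_of_injective h hsubtype, hmap]
    ext n
    simp only [mem_support_iff, coeff_C_mul, mul_ne_zero_iff, hc, ne_eq, not_false_eq_true,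
      true_and]
  have hdeg' : h.natDegree < p := by
    rwa [← natDegree_map_eq_of_injective hsubtype, hmap, natDegree_C_mul hc]
  have hmem : ∀ x ∈ S, x ∈ B := fun x hx ↦
    mem_valuationSubring_of_pow_eq_one B (NeZero.ne p) (hS x hx)
  lift S to Finset B using hmem
  rw [forall_mem_image] at hS hroot
  have hroot' : ∀ x ∈ S, h.IsRoot x := fun x hx ↦ by
    refine (isRoot_map_iff hsubtype).mp ?_
    rw [hmap]
    exact root_mul_left_of_isRoot _ (hroot hx)
  calc
    #(S.image Subtype.val) = #S := card_image_of_injective S Subtype.val_injective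
    _ < #(h.map (IsLocalRing.residue B)).support :=
      card_lt_card_support_map _ hres hdeg' (fun x hx ↦ Subtype.val_injective (hS hx)) hroot'
    _ ≤ #g.support := hsupp ▸ card_le_card (support_map_subset _ h)

end RootsOfUnity

section GeneratingPolynomial

variable {N : ℕ} {K : Type*} [Semiring K] {T : Finset (ZMod N)}

/-- The generating polynomial `∑ t, f t * X ^ t` of a function supported on `T ⊆ ℤ_N`, each residue
class being represented by its least nonnegative element. -/
noncomputable def generatingPolynomial (f : T → K) : K[X] :=
  ∑ t : T, monomial (t : ZMod N).val (f t)

lemma support_generatingPolynomial_subset (f : T → K) :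
    (generatingPolynomial f).support ⊆ T.image ZMod.val := by
  intro n hn
  rw [mem_support_iff, generatingPolynomial, finsetSum_coeff] at hn
  obtain ⟨t, -, ht⟩ := exists_ne_zero_of_sum_ne_zero hn
  rw [coeff_monomial] at ht
  exact mem_image.mpr ⟨t, t.2, (ite_ne_right_iff.mp ht).1⟩

lemma card_support_generatingPolynomial_le (f : T → K) :
    #(generatingPolynomial f).support ≤ #T :=
  (card_le_card (support_generatingPolynomial_subset f)).trans card_image_le

variable [NeZero N]

lemma natDegree_generatingPolynomial_lt (f : T → K) : (generatingPolynomial f).natDegree < N := by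
  have hle : (generatingPolynomial f).natDegree ≤ N - 1 :=
    natDegree_sum_le_of_forall_le _ _ fun t _ ↦
      (natDegree_monomial_le _).trans (Nat.le_sub_one_of_lt (ZMod.val_lt _))
  exact hle.trans_lt (Nat.sub_one_lt (NeZero.ne N))

lemma generatingPolynomial_ne_zero {f : T → K} (hf : f ≠ 0) : generatingPolynomial f ≠ 0 := by
  obtain ⟨t, ht⟩ := Function.ne_iff.mp hf
  intro hzero
  apply ht
  have hcoeff := congrArg (coeff · (t : ZMod N).val) hzero
  simpa [generatingPolynomial, coeff_monomial, (ZMod.val_injective N).eq_iff] using hcoeff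

end GeneratingPolynomial

section FourierMatrix

/-- The matrix of the Fourier transform with kernel `ψ (k * t)`, from functions supported on `T` to
functions on the set `Ω` of frequencies. -/
def restrictedFourierMatrix {R K : Type*} [Mul R] [AddMonoid R] [CommMonoid K]
    (ψ : AddChar R K) (T Ω : Finset R) : Matrix Ω T K :=
  Matrix.of fun k t ↦ ψ (k * t)

lemma transpose_restrictedFourierMatrix {R K : Type*} [CommRing R] [CommMonoid K]
    (ψ : AddChar R K) (T Ω : Finset R) :
    (restrictedFourierMatrix ψ T Ω)ᵀ = restrictedFourierMatrix ψ Ω T := by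
  ext t k
  simp only [restrictedFourierMatrix, Matrix.transpose_apply, Matrix.of_apply, mul_comm]

lemma restrictedFourierMatrix_mulVec {R K : Type*} [Mul R] [AddMonoid R] [CommSemiring K]
    (ψ : AddChar R K) {T Ω : Finset R} (f : T → K) (k : Ω) :
    (restrictedFourierMatrix ψ T Ω *ᵥ f) k = ∑ t : T, f t * ψ (k * t) :=
  sum_congr rfl fun _ _ ↦ mul_comm _ _

lemma restrictedFourierMatrix_mulVec_eq_eval {N : ℕ} [NeZero N] {K : Type*} [CommSemiring K]
    (ψ : AddChar (ZMod N) K) {T Ω : Finset (ZMod N)} (f : T → K) (k : Ω) :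
    (restrictedFourierMatrix ψ T Ω *ᵥ f) k = (generatingPolynomial f).eval (ψ k) := by
  rw [restrictedFourierMatrix_mulVec, generatingPolynomial, eval_finsetSum]
  refine sum_congr rfl fun t _ ↦ ?_
  rw [eval_monomial, ← AddChar.map_nsmul_eq_pow, nsmul_eq_mul, ZMod.natCast_zmod_val,
    mul_comm (k : ZMod N)]

lemma mulVec_surjective_of_transpose_mulVec_injective {m n K : Type*} [Fintype m] [Fintype n]
    [Field K] {M : Matrix m n K} (hM : Function.Injective Mᵀ.mulVec) :
    Function.Surjective M.mulVec := by
  refine (LinearMap.range_eq_top (f := M.mulVecLin)).mp (Submodule.eq_top_of_finrank_eq ?_)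
  calc
    M.rank = Mᵀ.rank := M.rank_transpose.symm
    _ = Module.finrank K (m → K) := LinearMap.finrank_range_of_inj (f := Mᵀ.mulVecLin) hM

variable {p : ℕ} [Fact p.Prime] {K : Type*} [Field K] [CharZero K] {ψ : AddChar (ZMod p) K}
  {T Ω : Finset (ZMod p)}

theorem restrictedFourierMatrix_mulVec_injective (hψ : Function.Injective ψ) (hcard : #T ≤ #Ω) :
    Function.Injective (restrictedFourierMatrix ψ T Ω).mulVec := by
  classical
  refine (injective_iff_map_eq_zero (restrictedFourierMatrix ψ T Ω).mulVecLin).mpr fun f hf ↦ ?_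
  by_contra hf0
  have hroot (k : ZMod p) (hk : k ∈ Ω) : (generatingPolynomial f).IsRoot (ψ k) :=
    (restrictedFourierMatrix_mulVec_eq_eval ψ f ⟨k, hk⟩).symm.trans (congrFun hf _)
  have hpow (k : ZMod p) : ψ k ^ p = 1 := by
    rw [← AddChar.map_nsmul_eq_pow, nsmul_eq_mul, CharP.cast_eq_zero, zero_mul,
      AddChar.map_zero_eq_one]
  have hlt := calc
    #Ω = #(Ω.image ψ) := (card_image_of_injective Ω hψ).symm
    _ < #(generatingPolynomial f).support :=
      card_lt_card_support_of_pow_eq_one (generatingPolynomial_ne_zero hf0)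
        (natDegree_generatingPolynomial_lt f) (forall_mem_image.mpr fun k _ ↦ hpow k)
        (forall_mem_image.mpr hroot)
    _ ≤ #T := card_support_generatingPolynomial_le f
  exact hlt.not_ge hcard

theorem restrictedFourierMatrix_mulVec_surjective (hψ : Function.Injective ψ) (hcard : #Ω ≤ #T) :
    Function.Surjective (restrictedFourierMatrix ψ T Ω).mulVec := by
  refine mulVec_surjective_of_transpose_mulVec_injective ?_
  rw [transpose_restrictedFourierMatrix]
  exact restrictedFourierMatrix_mulVec_injective hψ hcard

end FourierMatrix

lemma stdAddChar_mul_eq_exp {N : ℕ} [NeZero N] (k t : ZMod N) :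
    ZMod.stdAddChar (k * t) =
      Complex.exp (2 * Real.pi * Complex.I * ((k.val : ℂ) * (t.val : ℂ)) / N) := by
  simpa using ZMod.stdAddChar_coe (N := N) (k.val * t.val)

lemma stdAddChar_neg_mul_eq_exp {N : ℕ} [NeZero N] (k t : ZMod N) :
    ZMod.stdAddChar (-(k * t)) =
      Complex.exp (-2 * Real.pi * Complex.I * ((k.val : ℂ) * (t.val : ℂ)) / N) := by
  rw [AddChar.map_neg_eq_inv, stdAddChar_mul_eq_exp, ← Complex.exp_neg]
  ring_nf

theorem stmt_0_general {K : Type*} [Field K] [CharZero K] {N : ℕ} [Fact N.Prime]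
    {ψ : AddChar (ZMod N) K} (hψ : Function.Injective ψ) (T Ω : Finset (ZMod N))
    (F Finv : (T → K) → (Ω → K))
    (hF : ∀ f k, F f k = ∑ t : T, f t * ψ (-(k * t)))
    (hFinv : ∀ f k, Finv f k = (N : K)⁻¹ * ∑ t : T, f t * ψ (k * t)) :
    (#T = #Ω → Function.Bijective F ∧ Function.Bijective Finv) ∧
    (#T ≤ #Ω → Function.Injective F ∧ Function.Injective Finv) ∧
    (#Ω ≤ #T → Function.Surjective F ∧ Function.Surjective Finv) := by
  have hψinv : Function.Injective (ψ⁻¹ : AddChar (ZMod N) K) := hψ.comp neg_injective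
  have hN : (N : K)⁻¹ ≠ 0 := inv_ne_zero (NeZero.ne _)
  obtain rfl : F = (restrictedFourierMatrix ψ⁻¹ T Ω).mulVec := by
    ext f k
    simp only [hF, restrictedFourierMatrix_mulVec, AddChar.inv_apply]
  obtain rfl : Finv = ((N : K)⁻¹ • ·) ∘ (restrictedFourierMatrix ψ T Ω).mulVec := by
    ext f k
    simp only [hFinv, restrictedFourierMatrix_mulVec, Function.comp_apply, Pi.smul_apply,
      smul_eq_mul]
  have hinj (h : #T ≤ #Ω) := And.intro (restrictedFourierMatrix_mulVec_injective hψinv h)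
    ((MulAction.injective₀ hN).comp (restrictedFourierMatrix_mulVec_injective hψ h))
  have hsurj (h : #Ω ≤ #T) := And.intro (restrictedFourierMatrix_mulVec_surjective hψinv h)
    ((MulAction.surjective₀ hN).comp (restrictedFourierMatrix_mulVec_surjective hψ h))
  exact ⟨fun h ↦ ⟨⟨(hinj h.le).1, (hsurj h.ge).1⟩, (hinj h.le).2, (hsurj h.ge).2⟩, hinj, hsurj⟩

/-- Let `N` be prime and `T, Ω ⊆ ℤ_N` with `|T| = |Ω|`. Then the restricted
Fourier transform `F_{T→Ω} : ℓ²(T) → ℓ²(Ω)`, `f ↦ f̂|_Ω`, is a bijection; consequently it is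
injective when `|T| ≤ |Ω|` and surjective when `|T| ≥ |Ω|`, and the same claims hold for the
inverse Fourier transform. -/
theorem stmt_0 (N : ℕ) (hN : N.Prime) (T Ω : Finset (ZMod N))
    (F Finv : (T → ℂ) → (Ω → ℂ))
    (hF : ∀ f k, F f k = ∑ t : T, f t *
      Complex.exp (-2 * Real.pi * Complex.I *
        (((k : ZMod N).val : ℂ) * ((t : ZMod N).val : ℂ)) / N))
    (hFinv : ∀ f k, Finv f k = (N : ℂ)⁻¹ * ∑ t : T, f t *
      Complex.exp (2 * Real.pi * Complex.I *
        (((k : ZMod N).val : ℂ) * ((t : ZMod N).val : ℂ)) / N)) :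
    (T.card = Ω.card → Function.Bijective F ∧ Function.Bijective Finv) ∧
    (T.card ≤ Ω.card → Function.Injective F ∧ Function.Injective Finv) ∧
    (Ω.card ≤ T.card → Function.Surjective F ∧ Function.Surjective Finv) := by
  have := Fact.mk hN
  exact stmt_0_general ZMod.injective_stdAddChar T Ω F Finv
    (by simpa only [stdAddChar_neg_mul_eq_exp] using hF)
    (by simpa only [stdAddChar_mul_eq_exp] using hFinv)
end

section
/- Let N be a prime number, Ω a subset of ℤ_N, and f : ℤ_N → ℂ a signal supported on a set T with |T| ≤ |Ω|/2. Then f can be reconstructed uniquely from Ω and f̂|_Ω: if g : ℤ_N → ℂ satisfies |supp(g)| ≤ |Ω|/2 and ĝ(ω) = f̂(ω) for all ω ∈ Ω, then g = f. -/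
/-- The discrete Fourier transform on `ℤ_N`: `f̂(k) = ∑_{t ∈ ℤ_N} f(t) e^{-2πikt/N}`. -/
noncomputable def dft {N : ℕ} [NeZero N] (f : ZMod N → ℂ) (k : ZMod N) : ℂ :=
  ∑ t : ZMod N, f t *
    Complex.exp (-2 * Real.pi * Complex.I * ((k.val : ℂ) * (t.val : ℂ)) / N)

/-!
The difference `h = f - g` has at most `|Ω|` nonzero values while its transform vanishes on `Ω`,
so it suffices to prove Tao's uncertainty principle: for `N = p` prime, a nonzero signal has more
nonzero values than its transform has zeros. For the polynomial `P = ∑ h(t) X^t`, this says that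
`P` has fewer roots among the `p`-th roots of unity than it has monomials.

The coefficient field has a valuation ring `A` of residue characteristic `p`. Scale `P` so that its
coefficients lie in `A` and not all of them reduce to zero. A `p`-th root of unity reduces to `1`,
since `x ^ p = 1` forces `x = 1` in characteristic `p`; so `m` distinct such roots of `P` give the
reduction a root of multiplicity at least `m` at `1`. But a nonzero polynomial whose exponents are
distinct in the residue field cannot vanish at a nonzero point to an order as large as its number of
monomials.
-/

section Polynomial

open Polynomial IsLocalRing

theorem support_X_mul_derivative_sub_C_natCast_mul {R : Type*} [CommRing R] [NoZeroDivisors R]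
    {P : R[X]} (hP : Set.InjOn (Nat.cast : ℕ → R) P.support) {m : ℕ} (hm : m ∈ P.support) :
    (X * derivative P - C (m : R) * P).support = P.support.erase m := by
  have coeff_eq (n : ℕ) :
      (X * derivative P - C (m : R) * P).coeff n = ((n : R) - m) * P.coeff n := by
    cases n with
    | zero => simp
    | succ n =>
      rw [coeff_sub, coeff_X_mul, coeff_derivative, coeff_C_mul, Nat.cast_succ]
      ring
  ext n
  rw [mem_support_iff, coeff_eq, mul_ne_zero_iff, sub_ne_zero, Finset.mem_erase, mem_support_iff]
  exact and_congr_left fun hn => (hP.eq_iff (mem_support_iff.2 hn) hm).not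

-- The operator `P ↦ X P' - m P` kills the monomial of degree `m` and costs at most one order of
-- vanishing, so induction on the number of monomials applies.
theorem eq_zero_of_X_sub_C_pow_card_support_dvd {R : Type*} [CommRing R] [IsDomain R]
    {P : R[X]} {a : R} (ha : a ≠ 0) (hP : Set.InjOn (Nat.cast : ℕ → R) P.support)
    (hdvd : (X - C a) ^ P.support.card ∣ P) : P = 0 := by
  induction hn : P.support.card generalizing P with
  | zero => simpa using hn
  | succ n ih =>
    obtain ⟨m, hm⟩ : P.support.Nonempty := Finset.card_pos.1 (by lia)
    set Q := X * derivative P - C (m : R) * P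
    have hsupp : Q.support = P.support.erase m :=
      support_X_mul_derivative_sub_C_natCast_mul hP hm
    have hcard : Q.support.card = n := by rw [hsupp, Finset.card_erase_of_mem hm, hn]; rfl
    rw [hn] at hdvd
    have hQdvd : (X - C a) ^ n ∣ Q :=
      dvd_sub ((pow_sub_one_dvd_derivative_of_pow_dvd hdvd).mul_left _)
        (((pow_dvd_pow _ n.le_succ).trans hdvd).mul_left _)
    have hQ0 : Q = 0 := ih (hP.mono (by simp [hsupp])) (hcard ▸ hQdvd) hcard
    have hn0 : n = 0 := by simpa [hQ0] using hcard.symm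
    obtain ⟨k, c, hc, rfl⟩ := card_support_eq_one.1 (hn.trans (congrArg (· + 1) hn0))
    have hroot : (C c * X ^ k).eval a = 0 :=
      dvd_iff_isRoot.1 ((dvd_pow_self _ n.succ_ne_zero).trans hdvd)
    simp [hc, ha] at hroot

theorem rootMultiplicity_lt_card_support_s1 {R : Type*} [CommRing R] [IsDomain R]
    {P : R[X]} {a : R} (hP0 : P ≠ 0) (ha : a ≠ 0)
    (hP : Set.InjOn (Nat.cast : ℕ → R) P.support) :
    P.rootMultiplicity a < P.support.card := by
  by_contra! hle
  exact hP0 (eq_zero_of_X_sub_C_pow_card_support_dvd ha hP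
    ((le_rootMultiplicity_iff hP0).1 hle))

theorem card_le_rootMultiplicity_map {A B : Type*} [CommRing A] [IsDomain A] [CommRing B]
    [IsDomain B] (φ : A →+* B) {P : A[X]} (hP : P.map φ ≠ 0) {S : Finset A} {b : B}
    (hroot : ∀ x ∈ S, P.IsRoot x) (hS : ∀ x ∈ S, φ x = b) :
    S.card ≤ (P.map φ).rootMultiplicity b := by
  classical
  have hP0 : P ≠ 0 := fun h => hP (by simp [h])
  have hroots : S.val ≤ P.roots :=
    (Multiset.le_iff_subset S.nodup).2 fun x hx => (mem_roots hP0).2 (hroot x hx)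
  have hmap : S.val.map φ = Multiset.replicate S.card b :=
    Multiset.eq_replicate.2 ⟨by simp, by simpa using hS⟩
  rw [← count_roots, Multiset.le_count_iff_replicate_le, ← hmap]
  exact (Multiset.map_le_map hroots).trans (map_roots_le hP)

theorem exists_map_algebraMap_eq_C_mul_and_map_residue_ne_zero (A : Type*) {K : Type*}
    [CommRing A] [IsDomain A] [ValuationRing A] [Field K] [Algebra A K] [IsFractionRing A K]
    {P : K[X]} (hP : P ≠ 0) :
    ∃ (c : K) (Q : A[X]), Q.map (algebraMap A K) = C c * P ∧ Q.map (residue A) ≠ 0 := by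
  let v := ValuationRing.valuation A K
  obtain ⟨m, hm, hmax⟩ := P.support.exists_max_image (fun n => v (P.coeff n))
    (support_nonempty.2 hP)
  have hm0 : P.coeff m ≠ 0 := mem_support_iff.1 hm
  have hle (n : ℕ) : v ((P.coeff m)⁻¹ * P.coeff n) ≤ 1 := by
    by_cases hn : n ∈ P.support
    · rw [map_mul, map_inv₀]
      exact inv_mul_le_one_of_le₀ (hmax n hn) zero_le
    · simp [notMem_support_iff.1 hn]
  obtain ⟨Q, hQ⟩ : ∃ Q : A[X], Q.map (algebraMap A K) = C (P.coeff m)⁻¹ * P := by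
    rw [← mem_lifts, lifts_iff_coeff_lifts]
    intro n
    rw [coeff_C_mul]
    exact (ValuationRing.mem_integer_iff A K _).1 (hle n)
  refine ⟨_, Q, hQ, fun h => ?_⟩
  have hQm : Q.coeff m = 1 := by
    apply FaithfulSMul.algebraMap_injective A K
    rw [← coeff_map, hQ, coeff_C_mul, inv_mul_cancel₀ hm0, map_one]
  simpa [hQm] using congrArg (coeff · m) h

theorem exists_valuationSubring_charP_residueField_s1 (K : Type*) [Field K] [CharZero K] (p : ℕ)
    [Fact p.Prime] : ∃ A : ValuationSubring K, CharP (ResidueField A) p := by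
  let Z : Subring K := (Int.castRingHom K).range
  have hp : Ideal.span {(p : Z)} ≠ ⊤ := by
    rw [Ne, Ideal.span_singleton_eq_top]
    intro hunit
    obtain ⟨⟨_, n, rfl⟩, hn⟩ := hunit.exists_right_inv
    have hpnK : (p : K) * (n : K) = 1 := congrArg Subtype.val hn
    have hpn : (p : ℤ) * n = 1 := mod_cast hpnK
    exact (Nat.prime_iff_prime_int.1 Fact.out).not_isUnit (.of_mul_eq_one n hpn)
  obtain ⟨A, -, hA⟩ := (Ideal.span {(p : Z)}).image_subset_nonunits_valuationSubring hp
  have hpA : ((p : A) : K) ∈ A.nonunits :=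
    hA ⟨p, Ideal.mem_span_singleton_self _, by simp⟩
  have hres : residue A p = 0 :=
    (residue_eq_zero_iff _).2 (ValuationSubring.coe_mem_nonunits_iff.1 hpA)
  exact ⟨A, (CharP.charP_iff_prime_eq_zero Fact.out).2 (by simpa using hres)⟩

theorem card_lt_card_support_of_isRoot_of_pow_eq_one {K : Type*} [Field K] [CharZero K] {p : ℕ}
    [Fact p.Prime] {P : K[X]} (hP0 : P ≠ 0) (hP : Set.InjOn (Nat.cast : ℕ → ZMod p) P.support)
    {S : Finset K} (hroot : ∀ x ∈ S, P.IsRoot x) (hS : ∀ x ∈ S, x ^ p = 1) :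
    S.card < P.support.card := by
  classical
  obtain ⟨A, _⟩ := exists_valuationSubring_charP_residueField_s1 K p
  obtain ⟨c, Q, hQ, hQ0⟩ := exists_map_algebraMap_eq_C_mul_and_map_residue_ne_zero A hP0
  have hmem {x : K} (hx : x ^ p = 1) : x ∈ A := by
    rw [← A.valuation_le_one_iff, ← pow_le_one_iff (NeZero.ne p), ← map_pow, hx, map_one]
  let S' : Finset A := S.subtype (· ∈ A)
  have hcard : S'.card = S.card := by
    rw [Finset.card_subtype, Finset.filter_true_of_mem fun x hx => hmem (hS x hx)]
  have hroot' (x : A) (hx : x ∈ S') : Q.IsRoot x := by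
    refine .of_map (f := algebraMap A K) ?_ (FaithfulSMul.algebraMap_injective A K)
    rw [hQ]
    exact root_mul_left_of_isRoot _ (hroot _ (Finset.mem_subtype.1 hx))
  have hres (x : A) (hx : x ∈ S') : residue A x = 1 := by
    have hxp : x ^ p = 1 := Subtype.ext (hS _ (Finset.mem_subtype.1 hx))
    exact frobenius_inj (ResidueField A) p (by rw [frobenius_def, ← map_pow, hxp, map_one, map_one])
  have hsupp : (Q.map (residue A)).support ⊆ P.support := by
    refine (support_map_subset _ _).trans ?_
    rw [← support_map_of_injective Q (FaithfulSMul.algebraMap_injective A K), hQ, ← smul_eq_C_mul]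
    exact support_smul c P
  have hinj : Set.InjOn (Nat.cast : ℕ → ResidueField A) (Q.map (residue A)).support := by
    intro m hm n hn hmn
    apply hP (hsupp hm) (hsupp hn)
    rwa [ZMod.natCast_eq_natCast_iff, ← CharP.natCast_eq_natCast (ResidueField A)]
  calc S.card = S'.card := hcard.symm
    _ ≤ (Q.map (residue A)).rootMultiplicity 1 := card_le_rootMultiplicity_map _ hQ0 hroot' hres
    _ < (Q.map (residue A)).support.card := rootMultiplicity_lt_card_support_s1 hQ0 one_ne_zero hinj
    _ ≤ P.support.card := Finset.card_le_card hsupp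

end Polynomial

section Fourier

open Polynomial

variable {N : ℕ} [NeZero N]

/-- The generating polynomial `∑ f(t) X^t` of a signal `f` on `ℤ_N`, each residue `t` being
represented by its least nonnegative representative: its values at the `N`-th roots of unity are
the Fourier coefficients of `f`. -/
noncomputable def signalPolynomial {R : Type*} [Semiring R] (f : ZMod N → R) : R[X] :=
  ∑ t, monomial t.val (f t)

theorem coeff_signalPolynomial {R : Type*} [Semiring R] (f : ZMod N → R) (t : ZMod N) :
    (signalPolynomial f).coeff t.val = f t := by
  simp [signalPolynomial, coeff_monomial, (ZMod.val_injective N).eq_iff]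

theorem support_signalPolynomial {R : Type*} [Semiring R] (f : ZMod N → R) :
    ((signalPolynomial f).support : Set ℕ) = ZMod.val '' Function.support f := by
  ext n
  constructor
  · intro hn
    have hsum : ∑ t, (monomial t.val (f t)).coeff n ≠ 0 := by
      simpa only [signalPolynomial, Finset.mem_coe, mem_support_iff, finsetSum_coeff] using hn
    obtain ⟨t, -, ht⟩ := Finset.exists_ne_zero_of_sum_ne_zero hsum
    rw [coeff_monomial, ite_ne_right_iff] at ht
    exact ⟨t, ht.2, ht.1⟩
  · rintro ⟨t, ht, rfl⟩
    rwa [Finset.mem_coe, mem_support_iff, coeff_signalPolynomial]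

theorem card_support_signalPolynomial {R : Type*} [Semiring R] (f : ZMod N → R) :
    (signalPolynomial f).support.card = (Function.support f).ncard := by
  rw [← Set.ncard_coe_finset, support_signalPolynomial,
    Set.ncard_image_of_injective _ (ZMod.val_injective N)]

theorem injOn_natCast_support_signalPolynomial {R : Type*} [Semiring R] (f : ZMod N → R) :
    Set.InjOn (Nat.cast : ℕ → ZMod N) (signalPolynomial f).support := by
  rw [support_signalPolynomial]
  rintro _ ⟨s, -, rfl⟩ _ ⟨t, -, rfl⟩ hst
  rw [← ZMod.natCast_zmod_val s, hst, ZMod.natCast_zmod_val]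

theorem signalPolynomial_ne_zero {R : Type*} [Semiring R] {f : ZMod N → R} (hf : f ≠ 0) :
    signalPolynomial f ≠ 0 := by
  obtain ⟨t, ht⟩ := Function.ne_iff.1 hf
  exact fun h => ht (by rw [← coeff_signalPolynomial f, h, coeff_zero, Pi.zero_apply])

theorem card_lt_ncard_support_of_eval_signalPolynomial_eq_zero {K : Type*} [Field K] [CharZero K]
    (hN : N.Prime) {ξ : K} (hξ : IsPrimitiveRoot ξ N) {f : ZMod N → K} (hf : f ≠ 0)
    {Ω : Finset (ZMod N)} (hΩ : ∀ ω ∈ Ω, (signalPolynomial f).eval (ξ ^ ω.val) = 0) :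
    Ω.card < (Function.support f).ncard := by
  classical
  have : Fact N.Prime := ⟨hN⟩
  let S : Finset K := Ω.image (ξ ^ ·.val)
  have hS : S.card = Ω.card := Finset.card_image_of_injective _ fun j k hjk =>
    ZMod.val_injective N (hξ.pow_inj (ZMod.val_lt j) (ZMod.val_lt k) hjk)
  have hroot : ∀ x ∈ S, (signalPolynomial f).IsRoot x := Finset.forall_mem_image.2 hΩ
  have hpow : ∀ x ∈ S, x ^ N = 1 := by
    refine Finset.forall_mem_image.2 fun ω _ => ?_
    rw [pow_right_comm, hξ.pow_eq_one, one_pow]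
  calc Ω.card = S.card := hS.symm
    _ < (signalPolynomial f).support.card :=
      card_lt_card_support_of_isRoot_of_pow_eq_one (signalPolynomial_ne_zero hf)
        (injOn_natCast_support_signalPolynomial f) hroot hpow
    _ = (Function.support f).ncard := card_support_signalPolynomial f

theorem dft_eq_eval_signalPolynomial (f : ZMod N → ℂ) (k : ZMod N) :
    dft f k =
      (signalPolynomial f).eval ((Complex.exp (2 * Real.pi * Complex.I / N))⁻¹ ^ k.val) := by
  simp only [dft, signalPolynomial, eval_finsetSum, eval_monomial]
  refine Finset.sum_congr rfl fun t _ => congrArg (f t * ·) ?_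
  rw [← pow_mul, ← Complex.exp_neg, ← Complex.exp_nat_mul]
  congr 1
  push_cast
  ring

theorem card_lt_ncard_support_of_dft_eq_zero (hN : N.Prime) {f : ZMod N → ℂ} (hf : f ≠ 0)
    {Ω : Finset (ZMod N)} (hΩ : ∀ ω ∈ Ω, dft f ω = 0) : Ω.card < (Function.support f).ncard := by
  have hξ : IsPrimitiveRoot (Complex.exp (2 * Real.pi * Complex.I / N))⁻¹ N :=
    (Complex.isPrimitiveRoot_exp N (NeZero.ne N)).inv
  refine card_lt_ncard_support_of_eval_signalPolynomial_eq_zero hN hξ hf fun ω hω => ?_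
  rw [← dft_eq_eval_signalPolynomial, hΩ ω hω]

theorem dft_sub_apply (f g : ZMod N → ℂ) (k : ZMod N) : dft (f - g) k = dft f k - dft g k := by
  simp [dft, sub_mul]

theorem eq_of_eqOn_dft (hN : N.Prime) {f g : ZMod N → ℂ} {Ω : Finset (ZMod N)}
    (hcard : (Function.support f).ncard + (Function.support g).ncard ≤ Ω.card)
    (hfg : Set.EqOn (dft f) (dft g) Ω) : f = g := by
  by_contra hne
  have hlt : Ω.card < (Function.support (f - g)).ncard :=
    card_lt_ncard_support_of_dft_eq_zero hN (sub_ne_zero.2 hne) fun ω hω => by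
      rw [dft_sub_apply, hfg hω, sub_self]
  have hle : (Function.support (f - g)).ncard ≤ Ω.card :=
    (Set.ncard_le_ncard (Function.support_sub f g)).trans ((Set.ncard_union_le _ _).trans hcard)
  exact hle.not_gt hlt

end Fourier

/-- Let `N` be prime, `Ω ⊆ ℤ_N`, and `f : ℤ_N → ℂ` supported on a set `T` with
`|T| ≤ |Ω|/2`. Then `f` is uniquely reconstructible from `f̂|_Ω`: any `g` with
`|supp(g)| ≤ |Ω|/2` and `ĝ = f̂` on `Ω` equals `f`. -/
theorem stmt_1 (N : ℕ) [NeZero N] (hN : N.Prime) (Ω : Finset (ZMod N))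
    (f : ZMod N → ℂ) (T : Finset (ZMod N))
    (hsupp : ∀ t, f t ≠ 0 → t ∈ T)
    (hcard : (T.card : ℝ) ≤ (Ω.card : ℝ) / 2) :
    ∀ g : ZMod N → ℂ,
      ((Set.ncard {t : ZMod N | g t ≠ 0} : ℝ) ≤ (Ω.card : ℝ) / 2) →
      (∀ ω ∈ Ω, dft g ω = dft f ω) → g = f := by
  intro g hg hgf
  have hf : (Function.support f).ncard ≤ T.card :=
    (Set.ncard_le_ncard hsupp).trans_eq (Set.ncard_coe_finset T)
  have hgT : (Function.support g).ncard + T.card ≤ Ω.card := by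
    have : ((Function.support g).ncard : ℝ) + T.card ≤ Ω.card :=
      (add_le_add hg hcard).trans_eq (add_halves _)
    exact_mod_cast this
  exact eq_of_eqOn_dft hN ((Nat.add_le_add_left hf _).trans hgT) hgf
end

section
/- Let N be a prime number and let Ω be a proper subset of ℤ_N (i.e. Ω is not the set of all N frequencies). Then there exist distinct vectors f, g : ℤ_N → ℂ such that |supp(f)| ≤ |Ω|/2 + 1 and |supp(g)| ≤ |Ω|/2 + 1, and such that f̂(ω) = ĝ(ω) for all ω ∈ Ω. -/
/-!
Restricting the Fourier transform to `Ω` and to vectors supported on `|Ω| + 1` points gives a linear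
map into a space of dimension `|Ω|`, so some nonzero `h` with at most `|Ω| + 1` nonzero entries
satisfies `ĥ = 0` on `Ω`. Cutting the support of `h` into two halves writes `h = f - g` with `f` and
`g` as sparse as required.
-/

open Function Module Finset

theorem exists_eq_sub_of_ncard_support_le_add {ι M : Type*} [AddGroup M] {h : ι → M}
    (hfin : (support h).Finite) {a b : ℕ} (hab : (support h).ncard ≤ a + b) :
    ∃ f g : ι → M, h = f - g ∧ (support f).ncard ≤ a ∧ (support g).ncard ≤ b := by
  obtain ⟨A, hA, hcardA⟩ := Set.exists_subset_card_eq (min_le_right a (support h).ncard)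
  refine ⟨A.indicator h, -Aᶜ.indicator h, ?_, ?_, ?_⟩
  · rw [sub_neg_eq_add, Set.indicator_self_add_compl]
  · rw [Set.support_indicator, Set.inter_eq_left.mpr hA, hcardA]
    exact min_le_left _ _
  · rw [support_neg, Set.support_indicator, Set.inter_comm, ← Set.sdiff_eq,
      Set.ncard_sdiff hA (hfin.subset hA)]
    omega

section SparseVectors

variable {K ι W : Type*} [DivisionRing K] [AddCommGroup W] [Module K W] [FiniteDimensional K W]
  (L : (ι → K) →ₗ[K] W) {T : Finset ι}

theorem exists_ne_zero_support_subset_map_eq_zero (hT : finrank K W < #T) :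
    ∃ h : ι → K, h ≠ 0 ∧ support h ⊆ T ∧ L h = 0 := by
  let extendByZero : (T → K) →ₗ[K] (ι → K) := ExtendByZero.linearMap K ((↑) : T → ι)
  have hker : LinearMap.ker (L ∘ₗ extendByZero) ≠ ⊥ :=
    LinearMap.ker_ne_bot_of_finrank_lt (by simpa using hT)
  obtain ⟨v, hLv, hv⟩ := Submodule.exists_mem_ne_zero_of_ne_bot hker
  have hinj : Injective extendByZero :=
    extend_injective Subtype.val_injective (0 : ι → K)
  refine ⟨extendByZero v, (map_ne_zero_iff _ hinj).mpr hv, fun t ht ↦ ?_, hLv⟩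
  by_contra htT
  exact ht (extend_apply' v (0 : ι → K) t fun ⟨s, hs⟩ ↦ htT (hs ▸ s.2))

theorem exists_ne_map_eq_ncard_support_le (hT : finrank K W < #T) :
    ∃ f g : ι → K, f ≠ g ∧ (support f).ncard ≤ finrank K W / 2 + 1 ∧
      (support g).ncard ≤ finrank K W / 2 + 1 ∧ L f = L g := by
  obtain ⟨S, -, hS⟩ := exists_subset_card_eq (Nat.succ_le_of_lt hT)
  obtain ⟨h, h_ne, h_supp, hLh⟩ :=
    exists_ne_zero_support_subset_map_eq_zero L (T := S) (by omega)
  have h_card : (support h).ncard ≤ #S := by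
    simpa using Set.ncard_le_ncard h_supp S.finite_toSet
  obtain ⟨f, g, rfl, hf, hg⟩ := exists_eq_sub_of_ncard_support_le_add
    (S.finite_toSet.subset h_supp)
    (show (support h).ncard ≤ (finrank K W / 2 + 1) + (finrank K W / 2 + 1) by omega)
  exact ⟨f, g, sub_ne_zero.mp h_ne, hf, hg, by rwa [map_sub, sub_eq_zero] at hLh⟩

end SparseVectors

theorem dft_eq_zmod_dft {N : ℕ} [NeZero N] (f : ZMod N → ℂ) : dft f = ZMod.dft f := by
  ext k
  rw [dft, ZMod.dft_apply]
  refine sum_congr rfl fun t _ ↦ ?_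
  have hcast : -(t * k) = ((-(t.val * k.val) : ℤ) : ZMod N) := by simp
  rw [hcast, ZMod.stdAddChar_coe, smul_eq_mul, mul_comm]
  push_cast
  ring_nf

theorem stmt_2_general (N : ℕ) [NeZero N] (Ω : Finset (ZMod N)) (hΩ : Ω ≠ univ) :
    ∃ f g : ZMod N → ℂ, f ≠ g ∧
      (Set.ncard {t : ZMod N | f t ≠ 0} : ℝ) ≤ (#Ω : ℝ) / 2 + 1 ∧
      (Set.ncard {t : ZMod N | g t ≠ 0} : ℝ) ≤ (#Ω : ℝ) / 2 + 1 ∧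
      ∀ ω ∈ Ω, dft f ω = dft g ω := by
  let dftOnΩ : (ZMod N → ℂ) →ₗ[ℂ] (Ω → ℂ) :=
    LinearMap.funLeft ℂ ℂ ((↑) : Ω → ZMod N) ∘ₗ ZMod.dft.toLinearMap
  have hrank : finrank ℂ (Ω → ℂ) = #Ω := by simp
  have hlt : finrank ℂ (Ω → ℂ) < #(univ : Finset (ZMod N)) :=
    hrank ▸ card_lt_card (ssubset_univ_iff.mpr hΩ)
  obtain ⟨f, g, hne, hf, hg, hfg⟩ := exists_ne_map_eq_ncard_support_le dftOnΩ hlt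
  rw [hrank] at hf hg
  have real_bound {n : ℕ} (hn : n ≤ #Ω / 2 + 1) : (n : ℝ) ≤ (#Ω : ℝ) / 2 + 1 := by
    have : 2 * n ≤ #Ω + 2 := by omega
    have : (2 * n : ℝ) ≤ #Ω + 2 := mod_cast this
    linarith
  refine ⟨f, g, hne, real_bound hf, real_bound hg, fun ω hω ↦ ?_⟩
  rw [dft_eq_zmod_dft, dft_eq_zmod_dft]
  exact congrFun hfg ⟨ω, hω⟩

/-- Let `N` be prime and `Ω ⊊ ℤ_N` a proper subset of the frequencies. Then
there exist distinct vectors `f, g : ℤ_N → ℂ` with `|supp(f)|, |supp(g)| ≤ |Ω|/2 + 1` whose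
Fourier transforms agree on `Ω`. -/
theorem stmt_2 (N : ℕ) [NeZero N] (hN : N.Prime) (Ω : Finset (ZMod N))
    (hΩ : Ω ≠ Finset.univ) :
    ∃ f g : ZMod N → ℂ, f ≠ g ∧
      (Set.ncard {t : ZMod N | f t ≠ 0} : ℝ) ≤ (Ω.card : ℝ) / 2 + 1 ∧
      (Set.ncard {t : ZMod N | g t ≠ 0} : ℝ) ≤ (Ω.card : ℝ) / 2 + 1 ∧
      ∀ ω ∈ Ω, dft f ω = dft g ω :=
  stmt_2_general N Ω hΩ
end
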